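/- Let d ≥ 2, ε > 0, and let F satisfy the standing assumptions and the normalization (A3); assume in addition that the radial function z ↦ F(|z|) is of class C² on all of ℝ^d. Let Ω ⊂ ℝ^d be a bounded open set and let u ∈ C¹(closure(Ω)) ∩ C³(Ω) satisfy ε Δu(x) + div(a(|∇u|)∇u)(x) = 0 for every x ∈ Ω. Then sup_{closure(Ω)} |∇u| = sup_{∂Ω} |∇u|, i.e. |∇u| attains its maximum on the boundary. -/

import Mathlib

open Set Filter Topology MeasureTheory

/-- Pointwise divergence of a vector field on `ℝ^d`: the sum of the partial derivatives of
its components. -/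
noncomputable def diver {d : ℕ} (X : EuclideanSpace ℝ (Fin d) → EuclideanSpace ℝ (Fin d))
    (x : EuclideanSpace ℝ (Fin d)) : ℝ :=
  ∑ i, fderiv ℝ (fun y => X y i) x (EuclideanSpace.single i 1)

/-!
Both `u` and its translate `u (· + h)` solve `div (G (∇u)) = 0` for the flux
`G z = ε z + a(|z|) z`, which is strictly monotone because `F'` increases from `0`. Testing the
difference of the two equations with the square of the positive part of `u (· + h) - u - c` shows
that this difference cannot exceed in the interior a bound that it satisfies near the boundary.
Near the boundary the mean value inequality bounds `|u (x + h) - u x|` by `m |h|`, where `m`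
exceeds `|∇u|` on `∂Ω`; the bound therefore holds inside, and letting `h → 0` gives `|∇u| ≤ m`.
-/

theorem hasDerivAt_max_zero_sq (s : ℝ) :
    HasDerivAt (fun t : ℝ => max t 0 ^ 2) (2 * max s 0) s := by
  rcases lt_trichotomy s 0 with hs | rfl | hs
  · rw [max_eq_right hs.le, mul_zero]
    refine (hasDerivAt_const s (0 : ℝ)).congr_of_eventuallyEq ?_
    filter_upwards [Iio_mem_nhds hs] with t ht
    simp [max_eq_right (mem_Iio.1 ht).le]
  · simp only [max_self, mul_zero]
    rw [hasDerivAt_iff_isLittleO_nhds_zero]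
    have hsq : (fun t : ℝ => t ^ 2) =o[𝓝 0] fun t : ℝ => t := by
      simpa using Asymptotics.isLittleO_pow_id (𝕜 := ℝ) one_lt_two
    refine Asymptotics.IsBigO.trans_isLittleO (Asymptotics.isBigO_of_le _ fun t => ?_) hsq
    rcases le_total t 0 with ht | ht <;> simp [ht, sq_nonneg]
  · rw [max_eq_left hs.le]
    refine HasDerivAt.congr_of_eventuallyEq (by simpa using hasDerivAt_pow 2 s) ?_
    filter_upwards [Ioi_mem_nhds hs] with t ht
    simp [max_eq_left (mem_Ioi.1 ht).le]

theorem contDiff_one_max_zero_sq : ContDiff ℝ 1 fun t : ℝ => max t 0 ^ 2 := by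
  refine contDiff_one_iff_deriv.2 ⟨fun s => (hasDerivAt_max_zero_sq s).differentiableAt, ?_⟩
  rw [funext fun s => (hasDerivAt_max_zero_sq s).deriv]
  fun_prop

theorem strictMonoOn_of_hasDerivAt_pos {D : Set ℝ} (hD : Convex ℝ D) {f f' : ℝ → ℝ}
    (hf : ∀ s ∈ D, HasDerivAt f (f' s) s) (hf' : ∀ s ∈ D, 0 < f' s) : StrictMonoOn f D :=
  strictMonoOn_of_hasDerivWithinAt_pos hD
    (fun s hs => (hf s hs).continuousAt.continuousWithinAt)
    (fun s hs => (hf s (interior_subset hs)).hasDerivWithinAt)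
    fun s hs => hf' s (interior_subset hs)

section NormedSpace

variable {E V : Type*} [NormedAddCommGroup E] [NormedSpace ℝ E] [NormedAddCommGroup V]
  [NormedSpace ℝ V]

theorem contDiff_of_forall_mem_tsupport {n : WithTop ℕ∞} {f : E → V}
    (h : ∀ x ∈ tsupport f, ContDiffAt ℝ n f x) : ContDiff ℝ n f :=
  (contMDiff_of_tsupport fun x hx => (h x hx).contMDiffAt).contDiff

theorem fderiv_zero_of_even {f : E → V} (hf : Function.Even f) : fderiv ℝ f 0 = 0 := by
  have h : fderiv ℝ f 0 = -fderiv ℝ f 0 := by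
    simpa [hf _] using fderiv_comp_smul (f := f) (x := 0) (-1 : ℝ)
  have h2 : (2 : ℝ) • fderiv ℝ f 0 = 0 := by
    rw [two_smul]
    exact eq_neg_iff_add_eq_zero.1 h
  simpa using h2

theorem eq_zero_of_hasCompactSupport_of_fderiv_eq_zero [NoncompactSpace E] {f : E → V}
    (hf : Differentiable ℝ f) (hc : HasCompactSupport f) (h : ∀ x, fderiv ℝ f x = 0) : f = 0 := by
  obtain ⟨z, hz⟩ := (ne_univ_iff_exists_notMem _).1 hc.isCompact.ne_univ
  funext x
  exact (is_const_of_fderiv_eq_zero hf h x z).trans (image_eq_zero_of_notMem_tsupport hz)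

end NormedSpace

section Gradient

variable {E : Type*} [NormedAddCommGroup E] [InnerProductSpace ℝ E] [CompleteSpace E]

theorem norm_gradient (u : E → ℝ) (x : E) : ‖gradient u x‖ = ‖fderiv ℝ u x‖ := by
  simp [gradient]

theorem gradient_comp_add_right (u : E → ℝ) (h x : E) :
    gradient (fun y => u (y + h)) x = gradient u (x + h) := by
  simp only [gradient, fderiv_comp_add_right]

theorem contDiffOn_gradient {n m : WithTop ℕ∞} {u : E → ℝ} {s : Set E}
    (hu : ContDiffOn ℝ m u s) (hs : IsOpen s) (hnm : n + 1 ≤ m) :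
    ContDiffOn ℝ n (gradient u) s :=
  (InnerProductSpace.toDual ℝ E).symm.toContinuousLinearEquiv.contDiff.comp_contDiffOn
    (hu.fderiv_of_isOpen hs hnm)

theorem abs_sub_le_of_norm_gradient_le {u : E → ℝ} {s : Set E} (hs : Convex ℝ s) {m : ℝ}
    (hu : ∀ x ∈ s, DifferentiableAt ℝ u x) (hm : ∀ x ∈ s, ‖gradient u x‖ ≤ m)
    {x y : E} (hx : x ∈ s) (hy : y ∈ s) : |u y - u x| ≤ m * ‖y - x‖ :=
  hs.norm_image_sub_le_of_norm_fderiv_le hu (fun z hz => norm_gradient u z ▸ hm z hz) hx hy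

theorem norm_gradient_le_of_eventually_abs_sub_le {u : E → ℝ} {x : E} {m : ℝ} (hm : 0 ≤ m)
    (h : ∀ᶠ k in 𝓝 0, |u (x + k) - u x| ≤ m * ‖k‖) : ‖gradient u x‖ ≤ m := by
  rw [norm_gradient]
  refine norm_fderiv_le_of_lip' ℝ hm ?_
  have hsub : Tendsto (fun y => y - x) (𝓝 x) (𝓝 0) := tendsto_sub_nhds_zero_iff.2 tendsto_id
  filter_upwards [hsub.eventually h] with y hy
  simpa using hy

theorem hasGradientAt_norm {z : E} (hz : z ≠ 0) : HasGradientAt (‖·‖) (‖z‖⁻¹ • z) z := by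
  have hsqrt := (hasStrictFDerivAt_norm_sq z).hasFDerivAt.sqrt (by positivity)
  simp only [Real.sqrt_sq (norm_nonneg _)] at hsqrt
  refine hasGradientAt_iff_hasFDerivAt.2 (hsqrt.congr_fderiv ?_)
  ext y
  simp [field]

-- At `z = 0` both sides vanish: the right one whatever `F' 0 / 0` is, the left one because
-- `F ‖·‖` is even, or by convention if it is not differentiable there.
theorem gradient_comp_norm {F F' : ℝ → ℝ} (hF : ∀ s ∈ Ioi (0 : ℝ), HasDerivAt F (F' s) s) (z : E) :
    gradient (fun y : E => F ‖y‖) z = (F' ‖z‖ / ‖z‖) • z := by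
  rcases eq_or_ne z 0 with rfl | hz
  · simp [gradient, fderiv_zero_of_even (f := fun y : E => F ‖y‖) fun y => by simp]
  · have h := (hF ‖z‖ (norm_pos_iff.2 hz)).comp_hasFDerivAt z (hasGradientAt_norm hz).hasFDerivAt
    refine (hasGradientAt_iff_hasFDerivAt.2 (h.congr_fderiv ?_)).gradient
    ext y
    simp [div_eq_mul_inv, mul_assoc]

end Gradient

section StrictlyMonotoneField

variable {E : Type*} [NormedAddCommGroup E] [InnerProductSpace ℝ E]

/-- Strict monotonicity of a vector field in the sense of Minty and Browder; this is the
(degenerate) ellipticity of the operator `u ↦ div (G (∇u))`. -/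
def StrictlyMonotoneField (G : E → E) : Prop :=
  ∀ ⦃p q : E⦄, p ≠ q → 0 < inner ℝ (p - q) (G p - G q)

theorem StrictlyMonotoneField.smul_add {G : E → E} (hG : StrictlyMonotoneField G) {ε : ℝ}
    (hε : 0 ≤ ε) : StrictlyMonotoneField fun z => ε • z + G z := by
  intro p q hpq
  rw [add_sub_add_comm, ← smul_sub, inner_add_right, inner_smul_right, real_inner_self_eq_norm_sq]
  exact add_pos_of_nonneg_of_pos (by positivity) (hG hpq)

theorem inner_sub_radial_sub (a : ℝ → ℝ) (p q : E) :
    inner ℝ (p - q) (a ‖p‖ • p - a ‖q‖ • q) =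
      (a ‖p‖ * ‖p‖ - a ‖q‖ * ‖q‖) * (‖p‖ - ‖q‖) +
        (a ‖p‖ + a ‖q‖) * (‖p‖ * ‖q‖ - inner ℝ p q) := by
  simp only [inner_sub_left, inner_sub_right, inner_smul_right, real_inner_self_eq_norm_sq,
    real_inner_comm p q]
  ring

theorem strictlyMonotoneField_radial {a : ℝ → ℝ} (ha : StrictMonoOn (fun s => a s * s) (Ici 0)) :
    StrictlyMonotoneField fun z : E => a ‖z‖ • z := by
  have ha_pos {s : ℝ} (hs : 0 < s) : 0 < a s := by
    have h : a 0 * 0 < a s * s := ha self_mem_Ici hs.le hs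
    exact pos_of_mul_pos_left (by simpa using h) hs.le
  intro p q hpq
  have hCS : 0 ≤ ‖p‖ * ‖q‖ - inner ℝ p q := sub_nonneg.2 (real_inner_le_norm p q)
  rw [inner_sub_radial_sub]
  rcases eq_or_ne ‖p‖ ‖q‖ with hnorm | hnorm
  · have hq : 0 < ‖q‖ := by
      refine norm_pos_iff.2 fun hq => hpq ?_
      rw [hq, norm_zero, norm_eq_zero] at hnorm
      rw [hnorm, hq]
    have hCS_lt : inner ℝ p q < ‖p‖ * ‖q‖ := by
      rw [inner_lt_norm_mul_iff_real, hnorm]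
      exact fun h => hpq (smul_right_injective E hq.ne' h)
    have := ha_pos hq
    rw [hnorm] at hCS_lt ⊢
    simp only [sub_self, mul_zero, zero_add]
    exact mul_pos (by positivity) (sub_pos.2 hCS_lt)
  · have hradial : 0 < (a ‖p‖ * ‖p‖ - a ‖q‖ * ‖q‖) * (‖p‖ - ‖q‖) := by
      rcases hnorm.lt_or_gt with h | h
      · exact mul_pos_of_neg_of_neg (sub_neg.2 (ha (norm_nonneg p) (norm_nonneg q) h))
          (sub_neg.2 h)
      · exact mul_pos (sub_pos.2 (ha (norm_nonneg q) (norm_nonneg p) h)) (sub_pos.2 h)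
    have hangular : 0 ≤ (a ‖p‖ + a ‖q‖) * (‖p‖ * ‖q‖ - inner ℝ p q) := by
      rcases eq_or_ne p 0 with rfl | hp
      · simp
      rcases eq_or_ne q 0 with rfl | hq
      · simp
      have := ha_pos (norm_pos_iff.2 hp)
      have := ha_pos (norm_pos_iff.2 hq)
      positivity
    exact add_pos_of_pos_of_nonneg hradial hangular

end StrictlyMonotoneField

theorem strictMonoOn_div_mul_self {f : ℝ → ℝ} (hf : StrictMonoOn f (Ioi 0))
    (hf0 : Tendsto f (𝓝[>] 0) (𝓝 0)) : StrictMonoOn (fun s => f s / s * s) (Ici 0) := by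
  have hf_pos {t : ℝ} (ht : 0 < t) : 0 < f t := by
    have hhalf : 0 ≤ f (t / 2) := by
      refine le_of_tendsto hf0 ?_
      filter_upwards [Ioo_mem_nhdsGT (half_pos ht)] with s hs
      exact (hf hs.1 (half_pos ht) hs.2).le
    exact hhalf.trans_lt (hf (half_pos ht) ht (half_lt_self ht))
  intro s hs t _ hst
  have ht : 0 < t := (mem_Ici.1 hs).trans_lt hst
  simp only [div_mul_cancel₀ _ ht.ne']
  rcases (mem_Ici.1 hs).eq_or_lt with rfl | hs
  · simpa using hf_pos ht
  · simpa only [div_mul_cancel₀ _ hs.ne'] using hf hs ht hst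

section Divergence

variable {d : ℕ} {X Y : EuclideanSpace ℝ (Fin d) → EuclideanSpace ℝ (Fin d)}
  {x : EuclideanSpace ℝ (Fin d)}

theorem diver_eq_zero_of_notMem_tsupport (hx : x ∉ tsupport X) : diver X x = 0 := by
  refine Finset.sum_eq_zero fun i _ => ?_
  have hi : (fun y => X y i) =ᶠ[𝓝 x] fun _ => 0 := by
    filter_upwards [notMem_tsupport_iff_eventuallyEq.1 hx] with y hy
    simp [hy]
  simp [hi.fderiv_eq]

theorem diver_smul {f : EuclideanSpace ℝ (Fin d) → ℝ}
    (hf : DifferentiableAt ℝ f x) (hX : DifferentiableAt ℝ X x) :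
    diver (fun y => f y • X y) x = f x * diver X x + fderiv ℝ f x (X x) := by
  have hsum : X x = ∑ i, X x i • EuclideanSpace.single i (1 : ℝ) := by
    simpa using ((EuclideanSpace.basisFun (Fin d) ℝ).sum_repr (X x)).symm
  conv_rhs => rw [hsum]
  simp only [diver, PiLp.smul_apply, smul_eq_mul, map_sum, map_smul, Finset.mul_sum,
    ← Finset.sum_add_distrib]
  refine Finset.sum_congr rfl fun i _ => ?_
  rw [fderiv_fun_mul hf (differentiableAt_euclidean.1 hX i)]
  simp

theorem diver_add (hX : DifferentiableAt ℝ X x) (hY : DifferentiableAt ℝ Y x) :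
    diver (fun y => X y + Y y) x = diver X x + diver Y x := by
  simp only [diver, PiLp.add_apply, ← Finset.sum_add_distrib]
  refine Finset.sum_congr rfl fun i _ => ?_
  rw [fderiv_fun_add (differentiableAt_euclidean.1 hX i) (differentiableAt_euclidean.1 hY i)]
  simp

theorem diver_sub (hX : DifferentiableAt ℝ X x) (hY : DifferentiableAt ℝ Y x) :
    diver (fun y => X y - Y y) x = diver X x - diver Y x := by
  simp only [diver, PiLp.sub_apply, ← Finset.sum_sub_distrib]
  refine Finset.sum_congr rfl fun i _ => ?_
  rw [fderiv_fun_sub (differentiableAt_euclidean.1 hX i) (differentiableAt_euclidean.1 hY i)]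
  simp

theorem diver_const_smul (c : ℝ) (hX : DifferentiableAt ℝ X x) :
    diver (fun y => c • X y) x = c * diver X x := by
  simp [diver_smul (differentiableAt_const c) hX]

theorem diver_comp_add_right (X : EuclideanSpace ℝ (Fin d) → EuclideanSpace ℝ (Fin d))
    (h x : EuclideanSpace ℝ (Fin d)) : diver (fun y => X (y + h)) x = diver X (x + h) := by
  simp only [diver, fderiv_comp_add_right (f := fun y => X y _)]

theorem continuous_diver (hX : ContDiff ℝ 1 X) : Continuous (diver X) :=
  continuous_finsetSum _ fun i _ =>
    ((contDiff_euclidean.1 hX i).continuous_fderiv one_ne_zero).clm_apply continuous_const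

theorem hasCompactSupport_diver (hX : HasCompactSupport X) : HasCompactSupport (diver X) :=
  hX.mono' fun _ hx => not_imp_comm.1 diver_eq_zero_of_notMem_tsupport hx

theorem integral_diver_eq_zero (hX : ContDiff ℝ 1 X) (hc : HasCompactSupport X) :
    ∫ x, diver X x = 0 := by
  have hX_i (i : Fin d) : ContDiff ℝ 1 fun y => X y i := contDiff_euclidean.1 hX i
  have hc_i (i : Fin d) : HasCompactSupport fun y => X y i :=
    hc.comp_left (g := fun z : EuclideanSpace ℝ (Fin d) => z i) rfl
  have hint (i : Fin d) : Integrable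
      fun x => fderiv ℝ (fun y => X y i) x (EuclideanSpace.single i 1) :=
    (((hX_i i).continuous_fderiv one_ne_zero).clm_apply
      continuous_const).integrable_of_hasCompactSupport ((hc_i i).fderiv_apply ℝ _)
  unfold diver
  rw [integral_finsetSum _ fun i _ => hint i]
  refine Finset.sum_eq_zero fun i _ => ?_
  simpa using integral_mul_fderiv_eq_neg_fderiv_mul_of_integrable (μ := volume)
    (f := fun _ : EuclideanSpace ℝ (Fin d) => (1 : ℝ)) (g := fun y => X y i)
    (v := EuclideanSpace.single i 1) (by simp) (by simpa using hint i)
    (by simpa using (hX_i i).continuous.integrable_of_hasCompactSupport (hc_i i))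
    (fun _ _ => by fun_prop) fun x _ => (hX_i i).differentiable one_ne_zero x

theorem diver_eq_zero_of_nonneg (hX : ContDiff ℝ 1 X) (hc : HasCompactSupport X)
    (hnonneg : 0 ≤ diver X) (x : EuclideanSpace ℝ (Fin d)) : diver X x = 0 := by
  by_contra hne
  exact ((continuous_diver hX).integral_pos_of_hasCompactSupport_nonneg_nonzero
    (μ := volume) (hasCompactSupport_diver hc) hnonneg hne).ne' (integral_diver_eq_zero hX hc)

end Divergence

section MaximumPrinciple

variable {d : ℕ} [NeZero d] {X G : EuclideanSpace ℝ (Fin d) → EuclideanSpace ℝ (Fin d)}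
  {T K Ω : Set (EuclideanSpace ℝ (Fin d))} {u v : EuclideanSpace ℝ (Fin d) → ℝ}

-- Both terms of `div (φ X) = φ div X + ⟨∇φ, X⟩` are nonnegative, while their sum integrates to `0`.
theorem eq_zero_of_fderiv_apply_pos {φ : EuclideanSpace ℝ (Fin d) → ℝ} (hφ : ContDiff ℝ 1 φ)
    (hc : HasCompactSupport φ) (hnonneg : 0 ≤ φ) (hX : ∀ x ∈ tsupport φ, ContDiffAt ℝ 1 X x)
    (hdiv : ∀ x ∈ tsupport φ, 0 ≤ diver X x)
    (hpos : ∀ x ∈ tsupport φ, fderiv ℝ φ x ≠ 0 → 0 < fderiv ℝ φ x (X x)) : φ = 0 := by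
  have htsupp : tsupport (fun y => φ y • X y) ⊆ tsupport φ := tsupport_smul_subset_left φ X
  have hφX : ContDiff ℝ 1 fun y => φ y • X y :=
    contDiff_of_forall_mem_tsupport fun x hx => hφ.contDiffAt.smul (hX x (htsupp hx))
  have hdiver (x) (hx : x ∈ tsupport φ) : fderiv ℝ φ x (X x) ≤ diver (fun y => φ y • X y) x := by
    rw [diver_smul (hφ.differentiable one_ne_zero x) ((hX x hx).differentiableAt one_ne_zero)]
    exact le_add_of_nonneg_left (mul_nonneg (hnonneg x) (hdiv x hx))
  have hdiver_nonneg : 0 ≤ diver fun y => φ y • X y := fun x => by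
    by_cases hx : x ∈ tsupport φ
    · refine le_trans ?_ (hdiver x hx)
      by_cases h0 : fderiv ℝ φ x = 0
      · simp [h0]
      · exact (hpos x hx h0).le
    · exact (diver_eq_zero_of_notMem_tsupport fun h => hx (htsupp h)).ge
  have hdiver_zero := diver_eq_zero_of_nonneg hφX hc.smul_right hdiver_nonneg
  refine eq_zero_of_hasCompactSupport_of_fderiv_eq_zero (hφ.differentiable one_ne_zero) hc
    fun x => ?_
  by_contra h0
  have hx : x ∈ tsupport φ := by_contra fun hx => h0 (fderiv_of_notMem_tsupport ℝ hx)
  exact (hpos x hx h0).not_ge ((hdiver x hx).trans (hdiver_zero x).le)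

theorem nonpos_of_diver_nonneg {w : EuclideanSpace ℝ (Fin d) → ℝ} (hT : IsOpen T)
    (hK : IsCompact K) (hKT : K ⊆ T) (hw : ContDiffOn ℝ 1 w T) (hX : ContDiffOn ℝ 1 X T)
    (hdiv : ∀ x ∈ T, 0 ≤ diver X x)
    (hpos : ∀ x ∈ T, fderiv ℝ w x ≠ 0 → 0 < fderiv ℝ w x (X x))
    (hwK : ∀ x ∈ T \ K, w x ≤ 0) : ∀ x ∈ T, w x ≤ 0 := by
  have hw_at (x) (hx : x ∈ T) : ContDiffAt ℝ 1 w x := hw.contDiffAt (hT.mem_nhds hx)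
  set φ : EuclideanSpace ℝ (Fin d) → ℝ := T.indicator fun y => max (w y) 0 ^ 2 with hφ_def
  have hφ_eq (x) (hx : x ∈ T) : φ =ᶠ[𝓝 x] fun y => max (w y) 0 ^ 2 := by
    filter_upwards [hT.mem_nhds hx] with y hy using indicator_of_mem hy _
  have hφ_supp : Function.support φ ⊆ K := fun x hx => by
    obtain ⟨hxT, hx0⟩ := indicator_apply_ne_zero.1 hx
    exact by_contra fun hxK => hx0 (by simp [hwK x ⟨hxT, hxK⟩])
  have hφ_tsupp : tsupport φ ⊆ T := (closure_minimal hφ_supp hK.isClosed).trans hKT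
  have hφ_contDiff : ContDiff ℝ 1 φ := contDiff_of_forall_mem_tsupport fun x hx =>
    (contDiff_one_max_zero_sq.contDiffAt.comp x (hw_at x (hφ_tsupp hx))).congr_of_eventuallyEq
      (hφ_eq x (hφ_tsupp hx))
  have hφ_fderiv (x) (hx : x ∈ T) : fderiv ℝ φ x = (2 * max (w x) 0) • fderiv ℝ w x := by
    rw [(hφ_eq x hx).fderiv_eq]
    exact ((hasDerivAt_max_zero_sq (w x)).comp_hasFDerivAt x
      ((hw_at x hx).differentiableAt one_ne_zero).hasFDerivAt).fderiv
  have hφ_zero : φ = 0 := by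
    refine eq_zero_of_fderiv_apply_pos hφ_contDiff
      (hK.of_isClosed_subset (isClosed_tsupport φ) (closure_minimal hφ_supp hK.isClosed))
      (indicator_nonneg fun _ _ => sq_nonneg _)
      (fun x hx => hX.contDiffAt (hT.mem_nhds (hφ_tsupp hx))) (fun x hx => hdiv x (hφ_tsupp hx))
      fun x hx hne => ?_
    rw [hφ_fderiv x (hφ_tsupp hx)] at hne ⊢
    obtain ⟨hmax, hfderiv⟩ := smul_ne_zero_iff.1 hne
    exact mul_pos (lt_of_le_of_ne (by positivity) hmax.symm) (hpos x (hφ_tsupp hx) hfderiv)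
  intro x hx
  simpa [hφ_def, hx] using congrFun hφ_zero x

theorem sub_le_of_diver_le (hG : ContDiff ℝ 1 G) (hmono : StrictlyMonotoneField G)
    (hT : IsOpen T) (hK : IsCompact K) (hKT : K ⊆ T)
    (hu : ContDiffOn ℝ 2 u T) (hv : ContDiffOn ℝ 2 v T)
    (hdiv : ∀ x ∈ T, diver (fun y => G (gradient u y)) x ≤ diver (fun y => G (gradient v y)) x)
    {c : ℝ} (hc : ∀ x ∈ T \ K, v x - u x ≤ c) : ∀ x ∈ T, v x - u x ≤ c := by
  have hflux {f : EuclideanSpace ℝ (Fin d) → ℝ} (hf : ContDiffOn ℝ 2 f T) :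
      ContDiffOn ℝ 1 (fun y => G (gradient f y)) T :=
    hG.comp_contDiffOn (contDiffOn_gradient hf hT one_add_one_eq_two.le)
  have hflux_diff {f : EuclideanSpace ℝ (Fin d) → ℝ} (hf : ContDiffOn ℝ 2 f T) {x} (hx : x ∈ T) :
      DifferentiableAt ℝ (fun y => G (gradient f y)) x :=
    ((hflux hf).contDiffAt (hT.mem_nhds hx)).differentiableAt one_ne_zero
  have hdiff {f : EuclideanSpace ℝ (Fin d) → ℝ} (hf : ContDiffOn ℝ 2 f T) {x} (hx : x ∈ T) :
      DifferentiableAt ℝ f x := (hf.contDiffAt (hT.mem_nhds hx)).differentiableAt two_ne_zero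
  have hfderiv {x} (hx : x ∈ T) (z) :
      fderiv ℝ (fun y => v y - u y - c) x z = inner ℝ (gradient v x - gradient u x) z := by
    rw [fderiv_sub_const, fderiv_fun_sub (hdiff hv hx) (hdiff hu hx)]
    simp [inner_sub_left]
  have hnonpos : ∀ x ∈ T, v x - u x - c ≤ 0 := by
    refine nonpos_of_diver_nonneg (X := fun y => G (gradient v y) - G (gradient u y)) hT hK hKT
      (((hv.sub hu).sub contDiffOn_const).of_le one_le_two) ((hflux hv).sub (hflux hu))
      (fun x hx => ?_) (fun x hx hne => ?_) fun x hx => sub_nonpos.2 (hc x hx)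
    · rw [diver_sub (hflux_diff hv hx) (hflux_diff hu hx)]
      exact sub_nonneg.2 (hdiv x hx)
    · rw [hfderiv hx]
      refine hmono fun heq => hne (ContinuousLinearMap.ext fun z => ?_)
      simp [hfderiv hx, heq]
  exact fun x hx => sub_nonpos.1 (hnonpos x hx)

theorem abs_sub_le_of_diver_eq (hG : ContDiff ℝ 1 G) (hmono : StrictlyMonotoneField G)
    (hT : IsOpen T) (hK : IsCompact K) (hKT : K ⊆ T)
    (hu : ContDiffOn ℝ 2 u T) (hv : ContDiffOn ℝ 2 v T)
    (hdiv : ∀ x ∈ T, diver (fun y => G (gradient u y)) x = diver (fun y => G (gradient v y)) x)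
    {c : ℝ} (hc : ∀ x ∈ T \ K, |v x - u x| ≤ c) : ∀ x ∈ T, |v x - u x| ≤ c := fun x hx =>
  abs_sub_le_iff.2
    ⟨sub_le_of_diver_le hG hmono hT hK hKT hu hv (fun y hy => (hdiv y hy).le)
        (fun y hy => (abs_sub_le_iff.1 (hc y hy)).1) x hx,
      sub_le_of_diver_le hG hmono hT hK hKT hv hu (fun y hy => (hdiv y hy).ge)
        (fun y hy => (abs_sub_le_iff.1 (hc y hy)).2) x hx⟩

theorem abs_translate_sub_le (hG : ContDiff ℝ 1 G) (hmono : StrictlyMonotoneField G)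
    (hΩ : IsOpen Ω) (hu : ContDiffOn ℝ 2 u Ω)
    (hdiv : ∀ x ∈ Ω, diver (fun y => G (gradient u y)) x = 0)
    (hT : IsOpen T) (hK : IsCompact K) (hKT : K ⊆ T) {h : EuclideanSpace ℝ (Fin d)}
    (hball : ∀ x ∈ T, Metric.closedBall x ‖h‖ ⊆ Ω) {m : ℝ}
    (hm : ∀ x ∈ T \ K, ∀ y ∈ Metric.closedBall x ‖h‖, ‖gradient u y‖ ≤ m) :
    ∀ x ∈ T, |u (x + h) - u x| ≤ m * ‖h‖ := by
  have hself (x) (hx : x ∈ T) : x ∈ Ω := hball x hx (by simp)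
  have hshift (x) (hx : x ∈ T) : x + h ∈ Ω := hball x hx (by simp)
  refine abs_sub_le_of_diver_eq (v := fun y => u (y + h)) hG hmono hT hK hKT (hu.mono hself)
    (hu.comp (contDiff_id.add contDiff_const).contDiffOn hshift) (fun x hx => ?_) fun x hx => ?_
  · simp only [gradient_comp_add_right]
    rw [diver_comp_add_right (fun y => G (gradient u y)), hdiv _ (hself x hx),
      hdiv _ (hshift x hx)]
  · have hdiff (y) (hy : y ∈ Metric.closedBall x ‖h‖) : DifferentiableAt ℝ u y :=
      (hu.contDiffAt (hΩ.mem_nhds (hball x hx.1 hy))).differentiableAt two_ne_zero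
    simpa using abs_sub_le_of_norm_gradient_le (convex_closedBall x ‖h‖) hdiff (hm x hx)
      (x := x) (y := x + h) (by simp) (by simp)

theorem norm_gradient_le_of_frontier_lt (hG : ContDiff ℝ 1 G) (hmono : StrictlyMonotoneField G)
    (hΩ : IsOpen Ω) (hΩb : Bornology.IsBounded Ω)
    (hgrad : ContinuousOn (gradient u) (closure Ω)) (hu : ContDiffOn ℝ 2 u Ω)
    (hdiv : ∀ x ∈ Ω, diver (fun y => G (gradient u y)) x = 0) {m : ℝ} (hm : 0 ≤ m)
    (hfr : ∀ x ∈ frontier Ω, ‖gradient u x‖ < m) : ∀ x ∈ closure Ω, ‖gradient u x‖ ≤ m := by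
  set L : Set (EuclideanSpace ℝ (Fin d)) := closure Ω ∩ (‖gradient u ·‖) ⁻¹' Ici m
  have hL : IsCompact L := hΩb.isCompact_closure.of_isClosed_subset
    (hgrad.norm.preimage_isClosed_of_isClosed isClosed_closure isClosed_Ici) inter_subset_left
  have hLΩ : L ⊆ Ω := fun y hy => by_contra fun hyΩ =>
    (hfr y (hΩ.frontier_eq ▸ ⟨hy.1, hyΩ⟩)).not_ge hy.2
  obtain ⟨δ, hδ, hδΩ⟩ := hL.exists_cthickening_subset_open hΩ hLΩ
  obtain ⟨r, hr, hrδ⟩ : ∃ r > 0, r + 2 * r = δ := ⟨δ / 3, by positivity, by ring⟩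
  have hball (h : EuclideanSpace ℝ (Fin d)) (hh : ‖h‖ ≤ r) :
      ∀ y ∈ Metric.thickening (2 * r) L, Metric.closedBall y ‖h‖ ⊆ Ω := fun y hy z hz => by
    obtain ⟨a, ha, hya⟩ := Metric.mem_thickening_iff.1 hy
    refine hδΩ (Metric.mem_cthickening_of_dist_le z a δ L ha ?_)
    linarith [dist_triangle z y a, Metric.mem_closedBall.1 hz]
  have hLip (h : EuclideanSpace ℝ (Fin d)) (hh : ‖h‖ ≤ r) :
      ∀ x ∈ Metric.thickening (2 * r) L, |u (x + h) - u x| ≤ m * ‖h‖ := by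
    refine abs_translate_sub_le hG hmono hΩ hu hdiv Metric.isOpen_thickening
      (hL.cthickening (r := r))
      (Metric.cthickening_subset_thickening' (by positivity) (by linarith) L) (hball h hh)
      fun y hy z hz => ?_
    by_contra! hlt
    exact hy.2 (Metric.mem_cthickening_of_dist_le y z r L
      ⟨subset_closure (hball h hh y hy.1 hz), hlt.le⟩
      (dist_comm z y ▸ (Metric.mem_closedBall.1 hz).trans hh))
  intro x hx
  by_contra! hlt
  have hxL : x ∈ Metric.thickening (2 * r) L :=
    Metric.self_subset_thickening (by positivity) L ⟨hx, hlt.le⟩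
  refine hlt.not_ge (norm_gradient_le_of_eventually_abs_sub_le hm ?_)
  filter_upwards [Metric.closedBall_mem_nhds 0 hr] with h hh
  exact hLip h (by simpa using hh) x hxL

theorem sSup_norm_gradient_closure_eq_frontier (hG : ContDiff ℝ 1 G)
    (hmono : StrictlyMonotoneField G) (hΩ : IsOpen Ω) (hΩb : Bornology.IsBounded Ω)
    (hgrad : ContinuousOn (gradient u) (closure Ω)) (hu : ContDiffOn ℝ 2 u Ω)
    (hdiv : ∀ x ∈ Ω, diver (fun y => G (gradient u y)) x = 0) :
    sSup ((fun x => ‖gradient u x‖) '' closure Ω)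
      = sSup ((fun x => ‖gradient u x‖) '' frontier Ω) := by
  have hbdd : BddAbove ((fun x => ‖gradient u x‖) '' closure Ω) :=
    hΩb.isCompact_closure.bddAbove_image hgrad.norm
  have hsub : (fun x => ‖gradient u x‖) '' frontier Ω ⊆ (fun x => ‖gradient u x‖) '' closure Ω :=
    image_mono frontier_subset_closure
  have hnonneg (s : Set (EuclideanSpace ℝ (Fin d))) : 0 ≤ sSup ((fun x => ‖gradient u x‖) '' s) :=
    Real.sSup_nonneg (forall_mem_image.2 fun _ _ => norm_nonneg _)
  refine le_antisymm (Real.sSup_le (forall_mem_image.2 fun x hx => ?_) (hnonneg _))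
    (Real.sSup_le (fun r hr => le_csSup hbdd (hsub hr)) (hnonneg _))
  refine le_of_forall_gt_imp_ge_of_dense fun m hm => ?_
  exact norm_gradient_le_of_frontier_lt hG hmono hΩ hΩb hgrad hu hdiv ((hnonneg _).trans hm.le)
    (fun y hy => (le_csSup (hbdd.mono hsub) (mem_image_of_mem _ hy)).trans_lt hm) x hx

theorem stmt_16_general {ε : ℝ} (hε : 0 ≤ ε) {F F' : ℝ → ℝ}
    (hderiv : ∀ s ∈ Ioi (0 : ℝ), HasDerivAt F (F' s) s) (hmono : StrictMonoOn F' (Ioi 0))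
    (hF'0 : Tendsto F' (𝓝[>] 0) (𝓝 0))
    (hFrad : ContDiff ℝ 2 fun z : EuclideanSpace ℝ (Fin d) => F ‖z‖)
    (hΩ : IsOpen Ω) (hΩb : Bornology.IsBounded Ω)
    (hgrad : ContinuousOn (gradient u) (closure Ω)) (hu : ContDiffOn ℝ 2 u Ω)
    (heq : ∀ x ∈ Ω,
      ε * diver (gradient u) x +
        diver (fun y => (F' ‖gradient u y‖ / ‖gradient u y‖) • gradient u y) x = 0) :
    sSup ((fun x => ‖gradient u x‖) '' closure Ω)
      = sSup ((fun x => ‖gradient u x‖) '' frontier Ω) := by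
  set A : EuclideanSpace ℝ (Fin d) → EuclideanSpace ℝ (Fin d) := fun z => (F' ‖z‖ / ‖z‖) • z
  have hA_mono : StrictlyMonotoneField A :=
    strictlyMonotoneField_radial (strictMonoOn_div_mul_self hmono hF'0)
  have hA : ContDiff ℝ 1 A := by
    rw [show A = gradient fun z => F ‖z‖ from funext fun z => (gradient_comp_norm hderiv z).symm,
      ← contDiffOn_univ]
    exact contDiffOn_gradient hFrad.contDiffOn isOpen_univ one_add_one_eq_two.le
  refine sSup_norm_gradient_closure_eq_frontier ((contDiff_id.const_smul ε).add hA)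
    (hA_mono.smul_add hε) hΩ hΩb hgrad hu fun x hx => ?_
  have hgrad_diff : DifferentiableAt ℝ (gradient u) x :=
    ((contDiffOn_gradient hu hΩ one_add_one_eq_two.le).contDiffAt
      (hΩ.mem_nhds hx)).differentiableAt one_ne_zero
  have hA_diff : DifferentiableAt ℝ (fun y => A (gradient u y)) x :=
    (hA.differentiable one_ne_zero _).comp x hgrad_diff
  exact (diver_add (hgrad_diff.fun_const_smul ε) hA_diff).trans
    (by rw [diver_const_smul ε hgrad_diff]; exact heq x hx)

end MaximumPrinciple

/-- Gradient maximum principle for the approximate problems: if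
`u ∈ C¹(closure Ω) ∩ C³(Ω)` solves `ε Δu + div(a(|∇u|)∇u) = 0` in the bounded open set
`Ω`, then `|∇u|` attains its maximum on the boundary. -/
theorem stmt_16
    (d : ℕ) (hd : 2 ≤ d) (ε : ℝ) (hε : 0 < ε)
    (F F' F'' : ℝ → ℝ) (C₁ C₂ : ℝ)
    (hC₁ : 0 < C₁) (hC₂ : 0 < C₂)
    (hder1 : ∀ s ∈ Ioi (0:ℝ), HasDerivAt F (F' s) s)
    (hder2 : ∀ s ∈ Ioi (0:ℝ), HasDerivAt F' (F'' s) s)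
    (hF''cont : ContinuousOn F'' (Ioi 0))
    (hF''pos : ∀ s ∈ Ioi (0:ℝ), 0 < F'' s)
    (hF'0 : Tendsto F' (nhdsWithin 0 (Ioi 0)) (nhds 0))
    (hgrowth : ∀ s ∈ Ioi (0:ℝ), C₁ * s - C₂ ≤ F s ∧ F s ≤ C₂ * (1 + s))
    (hosc : ∀ s, 1 ≤ s → ∀ t ∈ Icc (s/2) (2*s), F'' s / F'' t ≤ C₂)
    (hF0 : Tendsto F (nhdsWithin 0 (Ioi 0)) (nhds 0))
    (hF'1 : Tendsto F' atTop (nhds 1))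
    (hFrad : ContDiff ℝ 2 (fun z : EuclideanSpace ℝ (Fin d) => F ‖z‖))
    (Ω : Set (EuclideanSpace ℝ (Fin d))) (hΩo : IsOpen Ω) (hΩb : Bornology.IsBounded Ω)
    (u : EuclideanSpace ℝ (Fin d) → ℝ)
    (hucont : ContinuousOn u (closure Ω))
    (hugradcont : ContinuousOn (gradient u) (closure Ω))
    (hu3 : ContDiffOn ℝ 3 u Ω)
    (heq : ∀ x ∈ Ω,
      ε * diver (gradient u) x +
        diver (fun y => (F' ‖gradient u y‖ / ‖gradient u y‖) • gradient u y) x = 0) :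
    sSup ((fun x => ‖gradient u x‖) '' closure Ω)
      = sSup ((fun x => ‖gradient u x‖) '' frontier Ω) := by
  have : NeZero d := ⟨by omega⟩
  exact stmt_16_general hε.le hder1 (strictMonoOn_of_hasDerivAt_pos (convex_Ioi 0) hder2 hF''pos)
    hF'0 hFrad hΩo hΩb hugradcont (hu3.of_le (by norm_num)) heq
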